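/- arXiv:2001.05114 — 2 statements merged into one kernel-verified Lean document; each statement's English description precedes it below -/
import Mathlib

section
/- For all real x ≥ 1 and all real α, the sum ∑_{n ≤ x} |sin(αn)|/n is at most (2/π) log x + (2/π)(C + log 2 + 3/x), where C is the Euler–Mascheroni constant. -/
/-!
The idea is to expand `|sin θ|` in its Fourier series
`|sin θ| = ∑_{m ∈ ℤ} c_m cos (2 m θ)`, `c_m = -(2/π) / (4 m² - 1)` (`hasSum_abs_sin`),
in which only `c_0 = 2/π` is positive, and in which `∑ c_m = 0` (take `θ = 0`). With
`C_N(t) = ∑_{n ≤ N} cos (n t) / n` this gives, for every constant `L`,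
`∑_{n ≤ N} |sin (α n)| / n = ∑_m c_m C_N(2 m α) = ∑_m c_m (C_N(2 m α) + L)`.
If `C_N ≥ -L` everywhere, all terms with `m ≠ 0` are nonpositive, so the sum is at most the term
`m = 0`, namely `(2/π) (H_N + L)`.

The admissible `L = log 2 + 1/(N+1) + 1/(N+1/2)` comes from `cosSum_ge`. Away from `0` the value
`C_N(t)` is compared with `C_N(π) = ∑ (-1)^n / n ≥ -log 2 - 1/(N+1)` through a decreasing
correction of `C_N` (`antitoneOn_cosSum_add`); close to `0` every term `cos (n t)` is decreasing in `t`,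
so that the bound at the edge of this range is enough.
Finally `H_N ≤ log N + C + 1/(2N)` (`harmonic_le`), and the error terms add up to at most `3/x`.
-/

open Real Finset


/-! ### The Fourier series of `|sin|` -/

/-- The Fourier coefficients of `sin` on `[0, π]`. Two integrations by parts give a linear equation
for the coefficient, since the second derivative of `sin` is `-sin`. -/
lemma fourierCoeffOn_sin (hab : (0 : ℝ) < 0 + π) (n : ℤ) :
    fourierCoeffOn hab (fun t => ((Real.sin t : ℝ) : ℂ)) n
      = ((-(2 / π) / (4 * (n : ℝ) ^ 2 - 1) : ℝ) : ℂ) := by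
  rcases eq_or_ne n 0 with rfl | hn
  · rw [fourierCoeffOn_eq_integral]
    simp only [neg_zero, fourier_zero, one_smul]
    rw [intervalIntegral.integral_ofReal, integral_sin]
    simp
    ring
  have hd1 : ∀ t : ℝ, HasDerivAt (fun t : ℝ => ((Real.sin t : ℝ) : ℂ)) ((Real.cos t : ℝ) : ℂ) t :=
    fun t => (Real.hasDerivAt_sin t).ofReal_comp
  have hd2 : ∀ t : ℝ, HasDerivAt (fun t : ℝ => ((Real.cos t : ℝ) : ℂ))
      (-((Real.sin t : ℝ) : ℂ)) t := fun t => by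
    have := (Real.hasDerivAt_cos t).ofReal_comp
    rwa [Complex.ofReal_neg] at this
  have e1 := fourierCoeffOn_of_hasDerivAt hab hn (fun t _ => hd1 t)
    (Continuous.intervalIntegrable (by fun_prop) _ _)
  have e2 := fourierCoeffOn_of_hasDerivAt hab hn (fun t _ => hd2 t)
    (Continuous.intervalIntegrable (by fun_prop) _ _)
  have e3 : fourierCoeffOn hab (fun t => -((Real.sin t : ℝ) : ℂ)) n
      = -fourierCoeffOn hab (fun t => ((Real.sin t : ℝ) : ℂ)) n := by
    have := fourierCoeffOn.const_smul (fun t : ℝ => ((Real.sin t : ℝ) : ℂ)) (-1) n hab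
    rw [neg_one_smul, neg_one_smul] at this
    exact this
  rw [e3] at e2
  rw [e2] at e1
  set c := fourierCoeffOn hab (fun t => ((Real.sin t : ℝ) : ℂ)) n
  have h0 : (fourier (-n) ((0 : ℝ) : AddCircle (0 + π - 0)) : ℂ) = 1 := by
    rw [fourier_coe_apply]; simp
  rw [h0] at e1
  have hpi : (π : ℂ) ≠ 0 := by exact_mod_cast Real.pi_ne_zero
  have hnC : (n : ℂ) ≠ 0 := by exact_mod_cast hn
  have hz : (4 * (n : ℂ) ^ 2 - 1) ≠ 0 := by
    have : (4 * n ^ 2 - 1 : ℤ) ≠ 0 := by omega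
    exact_mod_cast this
  simp only [zero_add, Real.sin_pi, Real.sin_zero, Real.cos_pi, Real.cos_zero] at e1
  push_cast at e1 ⊢
  have hI := Complex.I_sq
  rw [eq_div_iff hz]
  field_simp at e1 ⊢
  rw [hI] at e1
  refine mul_left_cancel₀ hpi ?_
  linear_combination (-1) * e1

/-- The Fourier series of the `π`-periodic function `|sin|`, with the sum over all integers `m`. -/
lemma hasSum_abs_sin (θ : ℝ) :
    HasSum (fun m : ℤ => -(2 / π) / (4 * (m : ℝ) ^ 2 - 1) * Real.cos (m * (2 * θ)))
      |Real.sin θ| := by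
  have : Fact (0 < π) := ⟨Real.pi_pos⟩
  have hper : Function.Periodic (fun t : ℝ => ((|Real.sin t| : ℝ) : ℂ)) π := fun t => by
    simp [Real.sin_add_pi]
  have hlift : AddCircle.liftIco π 0 (fun t => ((Real.sin t : ℝ) : ℂ)) = hper.lift := by
    funext z
    have hz : z ∈ (fun x : ℝ => (x : AddCircle π)) '' Set.Ico 0 (0 + π) := by
      rw [AddCircle.coe_image_Ico_eq]; trivial
    obtain ⟨y, hy, rfl⟩ := hz
    simp only
    rw [AddCircle.liftIco_coe_apply hy, Function.Periodic.lift_coe, abs_of_nonneg]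
    exact Real.sin_nonneg_of_nonneg_of_le_pi hy.1 (by linarith [hy.2])
  have hcont : Continuous hper.lift := by
    refine continuous_coinduced_dom.mpr ?_
    change Continuous (fun t : ℝ => ((|Real.sin t| : ℝ) : ℂ))
    fun_prop
  let F : C(AddCircle π, ℂ) := ⟨hper.lift, hcont⟩
  have hc : ∀ n, fourierCoeff F n = ((-(2 / π) / (4 * (n : ℝ) ^ 2 - 1) : ℝ) : ℂ) := fun n => by
    change fourierCoeff hper.lift n = _
    rw [← hlift, fourierCoeff_liftIco_eq, fourierCoeffOn_sin]
  have hs : Summable (fourierCoeff F) := by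
    have h2 := (Real.summable_one_div_int_pow (p := 2)).mpr (by norm_num)
    refine (h2.mul_left (2 / π)).of_norm_bounded_eventually ?_
    filter_upwards [Filter.eventually_cofinite_ne 0] with n hn
    rw [hc, Complex.norm_real, Real.norm_eq_abs, abs_div, abs_neg, abs_of_pos (by positivity),
      div_eq_mul_one_div]
    have h1 : (1 : ℝ) ≤ (n : ℝ) ^ 2 := by
      have : 0 < n ^ 2 := by positivity
      exact_mod_cast this
    rw [abs_of_pos (by linarith)]
    gcongr
    linarith
  have hF : F (θ : AddCircle π) = ((|Real.sin θ| : ℝ) : ℂ) := rfl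
  have h := has_pointwise_sum_fourier_series_of_summable hs (θ : AddCircle π)
  rw [hF] at h
  have h' := Complex.hasSum_re h
  rw [Complex.ofReal_re] at h'
  convert h' using 2 with m
  have he : (2 * π * Complex.I * m * θ / π : ℂ) = ((m * (2 * θ) : ℝ) : ℂ) * Complex.I := by
    have hpi : (π : ℂ) ≠ 0 := by exact_mod_cast Real.pi_ne_zero
    push_cast; field_simp
  rw [hc, fourier_coe_apply, he, smul_eq_mul, Complex.re_ofReal_mul, Complex.exp_ofReal_mul_I_re]

/-! ### Harmonic and alternating harmonic sums -/

/-- The sequence `H_k - log k - 1/(2k)` increases to the Euler–Mascheroni constant; its monotonicity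
is the inequality `log u ≤ (u - u⁻¹) / 2 = sinh (log u)` at `u = (k + 1) / k`. -/
lemma harmonic_le (N : ℕ) (hN : 1 ≤ N) :
    (harmonic N : ℝ) ≤ Real.log N + Real.eulerMascheroniConstant + 1 / (2 * N) := by
  let f : ℕ → ℝ := fun k => harmonic (k + 1) - Real.log ((k + 1 : ℕ) : ℝ) - 1 / (2 * (k + 1 : ℕ))
  have hmono : Monotone f := by
    refine monotone_nat_of_le_succ fun k => ?_
    simp only [f]
    rw [harmonic_succ (k + 1)]
    have hk : (0 : ℝ) < (k : ℝ) + 1 := by positivity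
    have h := Real.self_le_sinh_iff.mpr
      (Real.log_nonneg (x := ((k : ℝ) + 1 + 1) / (k + 1)) (by rw [le_div_iff₀ hk]; linarith))
    rw [Real.sinh_log (by positivity), Real.log_div (by positivity) (by positivity)] at h
    push_cast
    have e : ((k + 1 + 1 : ℝ) / (k + 1) - ((k + 1 + 1 : ℝ) / (k + 1))⁻¹) / 2
      = ((k : ℝ) + 1 + 1)⁻¹ - 1 / (2 * (k + 1 + 1)) + 1 / (2 * (k + 1)) := by
      field_simp; ring
    linarith
  have hlim : Filter.Tendsto f Filter.atTop (nhds Real.eulerMascheroniConstant) := by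
    have h1 := (Filter.tendsto_add_atTop_iff_nat 1).mpr Real.tendsto_harmonic_sub_log
    have h2 : Filter.Tendsto (fun k : ℕ => 1 / (2 * ((k + 1 : ℕ) : ℝ))) Filter.atTop (nhds 0) := by
      have := (tendsto_one_div_add_atTop_nhds_zero_nat (𝕜 := ℝ)).const_mul (1 / 2)
      rw [mul_zero] at this
      refine this.congr fun k => ?_
      push_cast; field_simp
    have h3 := h1.sub h2
    rw [sub_zero] at h3
    exact h3
  have := hmono.ge_of_tendsto hlim (N - 1)
  simp only [f, Nat.sub_add_cancel hN] at this
  linarith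

lemma alt_even (K : ℕ) : ∑ n ∈ Icc 1 (2 * K), (-1 : ℝ) ^ n / n = harmonic K - harmonic (2 * K) := by
  induction K with
  | zero => simp
  | succ K ih =>
    rw [show 2 * (K + 1) = 2 * K + 1 + 1 by ring, sum_Icc_succ_top (by omega),
      sum_Icc_succ_top (by omega), ih, harmonic_succ, harmonic_succ, harmonic_succ]
    have h : (-1 : ℝ) ^ (2 * K) = 1 := by simp
    rw [pow_succ (-1 : ℝ) (2 * K + 1), pow_succ (-1 : ℝ) (2 * K), h]
    push_cast
    field_simp
    ring

/-- By `alt_even` this says `H_{2K} - H_K ≤ log 2`, which holds because `H_n - log n` decreases. -/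
lemma alt_even_ge (K : ℕ) : -Real.log 2 ≤ ∑ n ∈ Icc 1 (2 * K), (-1 : ℝ) ^ n / n := by
  rw [alt_even]
  rcases Nat.eq_zero_or_pos K with rfl | hK
  · simp [Real.log_nonneg]
  have h := Real.strictAnti_eulerMascheroniSeq'.antitone (show K ≤ 2 * K by omega)
  simp only [Real.eulerMascheroniSeq', hK.ne', show 2 * K ≠ 0 by omega, if_false] at h
  push_cast at h
  rw [Real.log_mul (by norm_num) (by positivity)] at h
  linarith

lemma alt_ge (N : ℕ) : -Real.log 2 - 1 / (N + 1) ≤ ∑ n ∈ Icc 1 N, (-1 : ℝ) ^ n / n := by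
  rcases Nat.even_or_odd' N with ⟨K, rfl | rfl⟩
  · have := alt_even_ge K
    have : (0 : ℝ) ≤ 1 / ((2 * K : ℕ) + 1) := by positivity
    linarith
  · have h := alt_even_ge (K + 1)
    rw [show 2 * (K + 1) = 2 * K + 1 + 1 by ring, sum_Icc_succ_top (by omega)] at h
    have h1 : (-1 : ℝ) ^ (2 * K + 1 + 1) = 1 := by rw [pow_succ, pow_succ]; simp
    rw [h1] at h
    push_cast at h ⊢
    linarith

/-! ### Lower bounds for cosine sums -/

/-- The conjugate Dirichlet kernel in closed form. -/
lemma sum_sin (N : ℕ) (t : ℝ) : (∑ n ∈ Icc 1 N, Real.sin (n * t)) * (2 * Real.sin (t / 2))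
    = Real.cos (t / 2) - Real.cos ((N + 1 / 2) * t) := by
  induction N with
  | zero => simp [div_eq_inv_mul]
  | succ N ih =>
    rw [sum_Icc_succ_top (by omega), add_mul, ih]
    have e1 : ((N : ℝ) + 1 / 2) * t = ((N + 1 : ℕ) : ℝ) * t - t / 2 := by push_cast; ring
    have e2 : (((N + 1 : ℕ) : ℝ) + 1 / 2) * t = ((N + 1 : ℕ) : ℝ) * t + t / 2 := by push_cast; ring
    rw [e1, e2, Real.cos_sub, Real.cos_add]
    ring

/-- Integrating the kernel of `sum_sin` produces `log (sin (t / 2))` and an oscillating integral; the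
last term below is what makes the remaining derivative, a multiple of
`-(1 - sin ((N + 1/2) t)) cos (t / 2) / sin² (t / 2)`, of constant sign. -/
lemma antitoneOn_cosSum_add (N : ℕ) : AntitoneOn (fun t : ℝ => ∑ n ∈ Icc 1 N, Real.cos (n * t) / n
      + Real.log (Real.sin (t / 2))
      + (1 - Real.sin ((N + 1 / 2) * t)) / (2 * (N + 1 / 2) * Real.sin (t / 2)))
    (Set.Ioc 0 π) := by
  have hpos : ∀ t ∈ Set.Ioc 0 π, 0 < Real.sin (t / 2) := fun t ht =>
    Real.sin_pos_of_pos_of_lt_pi (by linarith [ht.1]) (by linarith [ht.1, ht.2])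
  have hM : (0 : ℝ) < N + 1 / 2 := by positivity
  have hd : ∀ t ∈ Set.Ioc 0 π, HasDerivAt (fun t : ℝ => ∑ n ∈ Icc 1 N, Real.cos (n * t) / n
      + Real.log (Real.sin (t / 2))
      + (1 - Real.sin ((N + 1 / 2) * t)) / (2 * (N + 1 / 2) * Real.sin (t / 2)))
      (-((1 - Real.sin ((N + 1 / 2) * t)) * Real.cos (t / 2)
        / (4 * (N + 1 / 2) * Real.sin (t / 2) ^ 2))) t := fun t ht => by
    have hs := hpos t ht
    have h1 : HasDerivAt (fun t : ℝ => ∑ n ∈ Icc 1 N, Real.cos (n * t) / n)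
        (∑ n ∈ Icc 1 N, -Real.sin (n * t)) t := by
      refine HasDerivAt.fun_sum fun n hn => ?_
      have hn0 : (n : ℝ) ≠ 0 := by
        have := (mem_Icc.mp hn).1
        positivity
      refine (((hasDerivAt_id t).const_mul (n : ℝ)).cos.div_const (n : ℝ)).congr_deriv ?_
      rw [mul_one, mul_div_cancel_right₀ _ hn0, id]
    have h2 : HasDerivAt (fun t : ℝ => Real.sin (t / 2)) (Real.cos (t / 2) * (1 / 2)) t :=
      ((hasDerivAt_id t).div_const 2).sin
    have h3 : HasDerivAt (fun t : ℝ => 1 - Real.sin ((N + 1 / 2) * t))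
        (-(Real.cos ((N + 1 / 2) * t) * ((N + 1 / 2) * 1))) t :=
      (((hasDerivAt_id t).const_mul ((N : ℝ) + 1 / 2)).sin).const_sub 1
    have h4 := (h1.add (h2.log hs.ne')).add
      (h3.div (h2.const_mul (2 * ((N : ℝ) + 1 / 2))) (by positivity))
    refine h4.congr_deriv ?_
    rw [sum_neg_distrib, eq_div_of_mul_eq (by positivity) (sum_sin N t)]
    field_simp
    ring
  refine antitoneOn_of_deriv_nonpos (convex_Ioc 0 π)
    (fun t ht => (hd t ht).continuousAt.continuousWithinAt)
    (fun t ht => (hd t (interior_subset ht)).differentiableAt.differentiableWithinAt)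
    fun t ht => ?_
  have ht' := interior_subset ht
  rw [(hd t ht').deriv, neg_nonpos]
  have hs := hpos t ht'
  have hc : 0 ≤ Real.cos (t / 2) :=
    Real.cos_nonneg_of_neg_pi_div_two_le_of_le (by linarith [ht'.1, Real.pi_pos]) (by linarith [ht'.2])
  have := Real.sin_le_one ((N + 1 / 2) * t)
  exact div_nonneg (mul_nonneg (by linarith) hc) (by positivity)

/-- Comparison of `∑ cos (n t) / n` with its value at `t = π`. The hypothesis `hs` says that `t` is
not much smaller than `1 / N`. -/
lemma cosSum_ge_of_sin (N : ℕ) (t : ℝ) (ht : t ∈ Set.Ioc 0 π)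
    (hs : 1 ≤ (N + 1 / 2) * Real.sin (t / 2)) :
    -Real.log 2 - 1 / (N + 1) - 1 / (N + 1 / 2) ≤ ∑ n ∈ Icc 1 N, Real.cos (n * t) / n := by
  have hM : (0 : ℝ) < N + 1 / 2 := by positivity
  have hpos : 0 < Real.sin (t / 2) :=
    Real.sin_pos_of_pos_of_lt_pi (by linarith [ht.1]) (by linarith [ht.1, ht.2])
  have h := antitoneOn_cosSum_add N ht ⟨Real.pi_pos, le_rfl⟩ ht.2
  simp only [Real.sin_pi_div_two, Real.log_one] at h
  have hcos : ∑ n ∈ Icc 1 N, Real.cos (n * π) / n = ∑ n ∈ Icc 1 N, (-1 : ℝ) ^ n / n := by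
    simp [Real.cos_nat_mul_pi]
  rw [hcos] at h
  have halt := alt_ge N
  have hA : 0 ≤ (1 - Real.sin ((N + 1 / 2) * π)) / (2 * (N + 1 / 2) * 1) :=
    div_nonneg (by linarith [Real.sin_le_one ((N + 1 / 2) * π)]) (by positivity)
  have hB : (1 - Real.sin ((N + 1 / 2) * t)) / (2 * (N + 1 / 2) * Real.sin (t / 2))
      ≤ 2 / (2 * (N + 1 / 2) * Real.sin (t / 2)) := by
    gcongr
    linarith [Real.neg_one_le_sin ((N + 1 / 2) * t)]
  have hl := Real.log_le_sub_one_of_pos hpos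
  have hs1 := Real.sin_le_one (t / 2)
  generalize Real.sin (t / 2) = s at *
  -- With `M = N + 1/2`, the difference of the two sides is `(1 - s) (M s - 1) / (M s)`.
  have key : s - 1 + 2 / (2 * (N + 1 / 2) * s) ≤ 1 / (N + 1 / 2) := by
    generalize (N : ℝ) + 1 / 2 = M at *
    have : 1 / M - (s - 1 + 2 / (2 * M * s)) = (1 - s) * (M * s - 1) / (M * s) := by
      field_simp; ring
    have : 0 ≤ (1 - s) * (M * s - 1) / (M * s) :=
      div_nonneg (mul_nonneg (by linarith) (by linarith)) (by positivity)
    linarith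
  linarith

/-- Uniform lower bound for the cosine sums. -/
lemma cosSum_ge (N : ℕ) (hN : 1 ≤ N) (t : ℝ) :
    -Real.log 2 - 1 / (N + 1) - 1 / (N + 1 / 2) ≤ ∑ n ∈ Icc 1 N, Real.cos (n * t) / n := by
  have hN' : (1 : ℝ) ≤ N := by exact_mod_cast hN
  have hM : (0 : ℝ) < N + 1 / 2 := by positivity
  have hMi : 1 / ((N : ℝ) + 1 / 2) ≤ 1 := by rw [div_le_one hM]; linarith
  have hMp : 0 < 1 / ((N : ℝ) + 1 / 2) := by positivity
  -- `cos (n t)` is a polynomial in `cos t`, so `t` may be replaced by an angle in `[0, π]`.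
  set φ := Real.arccos (Real.cos t) with hφ
  have hφ0 : 0 ≤ φ := Real.arccos_nonneg _
  have hφπ : φ ≤ π := Real.arccos_le_pi _
  have hcos : ∀ n : ℕ, Real.cos (n * t) = Real.cos (n * φ) := fun n => by
    have h1 := Polynomial.Chebyshev.T_real_cos t n
    have h2 := Polynomial.Chebyshev.T_real_cos φ n
    rw [hφ, Real.cos_arccos (Real.neg_one_le_cos t) (Real.cos_le_one t), h1] at h2
    exact_mod_cast h2
  simp_rw [hcos]
  by_cases hs : 1 ≤ (N + 1 / 2) * Real.sin (φ / 2)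
  · rcases hφ0.eq_or_lt with h0 | h0
    · rw [← h0] at hs; norm_num at hs
    · exact cosSum_ge_of_sin N φ ⟨h0, hφπ⟩ hs
  -- `t₀` is the smallest angle to which `cosSum_ge_of_sin` applies. As `N t₀ ≤ π`, each `cos (n t)`
  -- decreases on `[0, t₀]`, so the bound at `t₀` carries over to `φ ≤ t₀`.
  set t₀ := 2 * Real.arcsin (1 / (N + 1 / 2)) with ht₀
  have has0 : 0 < Real.arcsin (1 / ((N : ℝ) + 1 / 2)) := Real.arcsin_pos.mpr hMp
  have hasp := Real.arcsin_le_pi_div_two (1 / ((N : ℝ) + 1 / 2))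
  have hsin0 : Real.sin (t₀ / 2) = 1 / (N + 1 / 2) := by
    rw [ht₀, mul_div_cancel_left₀ _ (by norm_num : (2 : ℝ) ≠ 0),
      Real.sin_arcsin (by linarith) hMi]
  have hφt : φ ≤ t₀ := by
    by_contra! hlt
    have := Real.sin_le_sin_of_le_of_le_pi_div_two (x := t₀ / 2) (y := φ / 2)
      (by linarith [Real.pi_pos]) (by linarith) (by linarith)
    rw [hsin0, div_le_iff₀ hM] at this
    linarith
  have ht0M : t₀ * (N + 1 / 2) ≤ π := by
    have := Real.mul_le_sin (x := t₀ / 2) (by linarith) (by linarith)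
    rw [hsin0, le_div_iff₀ hM] at this
    have hp := Real.pi_pos
    calc t₀ * (N + 1 / 2) = π * (2 / π * (t₀ / 2) * (N + 1 / 2)) := by field_simp
      _ ≤ π * 1 := by gcongr
      _ = π := mul_one _
  refine (cosSum_ge_of_sin N t₀ ⟨by linarith, by linarith⟩ (by rw [hsin0]; field_simp; rfl)).trans ?_
  refine sum_le_sum fun n hn => ?_
  have hnN : (n : ℝ) ≤ N := by exact_mod_cast (mem_Icc.mp hn).2
  gcongr
  refine Real.cos_le_cos_of_nonneg_of_le_pi (by positivity) ?_ (by gcongr)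
  calc (n : ℝ) * t₀ ≤ (N + 1 / 2) * t₀ := by
        have : 0 ≤ t₀ := by linarith
        gcongr; linarith
    _ ≤ π := by linarith

/-! ### The logarithmic bound -/

theorem sum_abs_sin_div_le (x α : ℝ) (hx : 1 ≤ x) :
    ∑ n ∈ Finset.Icc 1 ⌊x⌋₊, |Real.sin (α * n)| / (n : ℝ)
      ≤ (2 / Real.pi) * Real.log x
        + (2 / Real.pi) * (Real.eulerMascheroniConstant + Real.log 2 + 3 / x) := by
  set N := ⌊x⌋₊ with hNdef
  have hN : 1 ≤ N := Nat.one_le_floor_iff x |>.mpr hx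
  have hN' : (1 : ℝ) ≤ N := by exact_mod_cast hN
  have hNx : (N : ℝ) ≤ x := Nat.floor_le (by linarith)
  have hxN : x < N + 1 := Nat.lt_floor_add_one x
  have hπ := Real.pi_pos
  set L := Real.log 2 + 1 / ((N : ℝ) + 1) + 1 / ((N : ℝ) + 1 / 2) with hL
  have hC : ∀ t, 0 ≤ ∑ n ∈ Icc 1 N, Real.cos (n * t) / n + L := fun t => by
    linarith [cosSum_ge N hN t]
  have hsum : HasSum (fun m : ℤ => -(2 / π) / (4 * (m : ℝ) ^ 2 - 1) *
      (∑ n ∈ Icc 1 N, Real.cos (n * (m * (2 * α))) / n + L))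
      (∑ n ∈ Icc 1 N, |Real.sin (α * n)| / (n : ℝ)) := by
    have h1 := hasSum_sum (s := Icc 1 N) fun n _ => (hasSum_abs_sin (α * n)).div_const (n : ℝ)
    -- The series at `θ = 0` says that the coefficients sum to `0`, so adding `L` changes nothing.
    have h2 := (hasSum_abs_sin 0).mul_right L
    have h3 := h1.add h2
    simp only [Real.sin_zero, abs_zero, zero_mul, add_zero, mul_zero, Real.cos_zero, mul_one] at h3
    refine (congrArg (fun f => HasSum f _) (funext fun m => ?_)).mpr h3
    rw [mul_add, mul_sum]
    congr 1
    refine sum_congr rfl fun n _ => ?_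
    rw [show (n : ℝ) * (m * (2 * α)) = m * (2 * (α * n)) by ring, mul_div_assoc]
  have hle : ∑ n ∈ Icc 1 N, |Real.sin (α * n)| / (n : ℝ) ≤ 2 / π * (harmonic N + L) := by
    have h0 := hasSum_ite_eq (0 : ℤ) (2 / π * ((harmonic N : ℝ) + L))
    refine hasSum_le (fun m => ?_) hsum h0
    split_ifs with hm
    · subst hm
      simp [harmonic_eq_sum_Icc]
    · have h1 : (1 : ℝ) ≤ (m : ℝ) ^ 2 := by
        have : 0 < m ^ 2 := by positivity
        exact_mod_cast this
      refine mul_nonpos_of_nonpos_of_nonneg ?_ (hC _)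
      exact div_nonpos_of_nonpos_of_nonneg (by simp; positivity) (by linarith)
  have hH := harmonic_le N hN
  have hfin : (harmonic N : ℝ) + L ≤ Real.log x +
      (Real.eulerMascheroniConstant + Real.log 2 + 3 / x) := by
    have hx0 : 0 < x := by linarith
    have hlog : Real.log N ≤ Real.log x + (N / x - 1) := by
      have := Real.log_le_sub_one_of_pos (x := N / x) (by positivity)
      rw [Real.log_div (by positivity) (by positivity)] at this
      linarith
    have a1 : N / x - 1 + 1 / (2 * N) ≤ (1 / 2) / x := by
      have e : (1 / 2) / x - (N / x - 1 + 1 / (2 * N)) = (x - N) * (2 * N - 1) / (2 * N * x) := by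
        field_simp; ring
      have : 0 ≤ (x - N) * (2 * N - 1) / (2 * N * x) :=
        div_nonneg (mul_nonneg (by linarith) (by linarith)) (by positivity)
      linarith
    have a2 : 1 / ((N : ℝ) + 1) ≤ 1 / x := by gcongr
    have a3 : 1 / ((N : ℝ) + 1 / 2) ≤ (3 / 2) / x := by
      rw [div_le_div_iff₀ (by positivity) hx0]; linarith
    have : (3 : ℝ) / x = (1 / 2) / x + 1 / x + (3 / 2) / x := by ring
    linarith
  calc _ ≤ _ := hle
    _ ≤ 2 / π * (Real.log x + (Real.eulerMascheroniConstant + Real.log 2 + 3 / x)) := by gcongr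
    _ = _ := by ring
end

section
/- For every real x > 1, the prime counting function satisfies π(x) < 1.25506 · x / log x. -/
/-!
Put `C = 1.25506` and `c = 1.115`. The inequality is proved by analysis for `x ≥ 16384` and by a
verified computation below that point.

*Large `x`.* Chebyshev's combination `T(N) - T(N/2) - T(N/3) - T(N/5) + T(N/30)`, where
`T(N) = log ⌊N⌋!`, dominates `ψ(N) - ψ(N/6)` (`psi_sub_psi_le`). Estimating the factorials and
iterating over `N, N/6, N/36, …` gives `ψ(N) ≤ 1.1056 N + 1.4 log² N + 12` (`psi_nat_le`), hence
`θ(t) ≤ c t` for `t ≥ 16384` (`theta_le_of_ge`). Partial summation from `x₀ = 16384` reads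
`π(x) = π(x₀) + θ(x)/log x - θ(x₀)/log x₀ + ∫_{x₀}^x θ(t)/(t log² t) dt`.
Here `θ(x)/log x ≤ c x/log x`, and since `c/log² t ≤ (C - c) · d/dt (t/log t)` once
`log t ≥ 1 + c/(C - c)`, the integral is at most `(C - c)(x/log x - x₀/log x₀)`. So the bound
follows from the single numerical fact `π(x₀) log x₀ < θ(x₀) + (C - c) x₀`
(`primeCounting_lt_of_ge`).

*Small `x`.* The kernel steps through the integers up to `16384`, recognises primes by a gcd with
a factorial, checks `π(p) log p < C p` at each prime, and accumulates the product of the primes,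
which bounds `θ(16384)` from below (`scanInv_16384`). This gives the inequality for `x < 16384` as
well as the numerical fact needed above. Between primes nothing has to be checked, because `π` is
constant there and `C x - π(x) log x` increases (`primeCounting_mul_log_lt_of_floor`).

The case `x = 113` is nearly sharp, and fixes the precision required of logarithms: a bound
`n ^ 545 ≤ 2 ^ j` is used, and `545` is chosen because `545 log₂ 113` lies just below an integer.
-/

open Chebyshev ArithmeticFunction

/-! ### A verified scan over the integers up to 16384 -/

/-- An integer test sufficient for `k * log n < 1.25506 * n`: it asserts `n ^ 545 ≤ 2 ^ j` with
`j = ⌊545 * 1.25506 * n / (k * 0.6931471808)⌋`, where `0.6931471808` is an upper bound for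
`log 2`. -/
def logTest (n k : ℕ) : Bool :=
  Nat.ble (n ^ 545) (2 ^ ((62753 * n * 545 * 200000) / (k * 6931471808)))

/-- `force x g` equals `g x`, but matching on `x` makes the kernel evaluate it to a numeral before
`g` is unfolded, so accumulators do not grow into large unevaluated expressions. -/
def force {α : Type} (x : ℕ) (g : ℕ → α) : α :=
  match x with
  | 0 => g 0
  | m + 1 => g (m + 1)

@[simp] lemma force_eq {α : Type} (x : ℕ) (g : ℕ → α) : force x g = g x := by
  cases x <;> rfl

/-- `scan F k' e f n k m` steps from `n` through the next `f` integers, given `k = π(n)` and a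
running product `m` of primes. An integer coprime to `F` (a factorial) counts as prime; at each
one `logTest` must succeed. At the end the count must equal `k'`, and the product must be at
least `2 ^ e`. -/
def scan (F k' e : ℕ) : ℕ → ℕ → ℕ → ℕ → Bool
  | 0, _, k, m => Nat.beq k k' && Nat.ble (2 ^ e) m
  | f + 1, n, k, m =>
    force (n + 1) fun p =>
      if Nat.beq (Nat.gcd p F) 1 then
        force (k + 1) fun k₁ =>
          logTest p k₁ && force (m * p) fun m₁ => scan F k' e f p k₁ m₁
      else scan F k' e f p k m

/-- What is known once the integers up to `n` have been scanned: `π(n) = k`, a lower bound `t` for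
`θ(n)`, and the inequality at every integer in `[1, n]`. -/
structure ScanInv (n k : ℕ) (t : ℝ) : Prop where
  count : n.primeCounting = k
  le_theta : t ≤ θ n
  bound : ∀ i : ℕ, 1 ≤ i → i ≤ n → (i.primeCounting : ℝ) * Real.log i < 1.25506 * i

/-- A composite `n < (s + 1) ^ 2` has a prime factor at most `s`, which divides `s !`; a prime
`n > s` is coprime to `s !`. -/
lemma prime_iff_coprime_factorial {n s : ℕ} (h1 : 1 < n) (hs : s < n) (hn : n < (s + 1) ^ 2) :
    n.Prime ↔ n.Coprime s.factorial := by
  rw [Nat.coprime_factorial_iff h1.ne']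
  constructor
  · intro h
    rwa [h.minFac_eq]
  · intro h
    by_contra hp
    have := Nat.minFac_sq_le_self (by omega) hp
    nlinarith

lemma primeCounting_succ_of_prime {n : ℕ} (h : (n + 1).Prime) :
    (n + 1).primeCounting = n.primeCounting + 1 := by
  simp [Nat.primeCounting, Nat.primeCounting', Nat.count_succ _ (n + 1), h]

lemma primeCounting_succ_of_not_prime {n : ℕ} (h : ¬ (n + 1).Prime) :
    (n + 1).primeCounting = n.primeCounting := by
  simp [Nat.primeCounting, Nat.primeCounting', Nat.count_succ _ (n + 1), h]

lemma theta_succ_of_prime {n : ℕ} (h : (n + 1).Prime) :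
    θ ((n + 1 : ℕ) : ℝ) = θ n + Real.log ((n + 1 : ℕ) : ℝ) := by
  rw [theta_eq_sum_primesLE_log, theta_eq_sum_primesLE_log, Nat.primesLE_succ, if_pos h,
    Finset.sum_insert (Nat.notMem_primesLE n), add_comm]

lemma primeCounting_le_self (n : ℕ) : n.primeCounting ≤ n := by
  induction n with
  | zero => simp
  | succ n ih =>
    by_cases h : (n + 1).Prime
    · rw [primeCounting_succ_of_prime h]; omega
    · rw [primeCounting_succ_of_not_prime h]; omega

/-- Passage from `n` to any larger `x` with the prime count held fixed. Since `π(n) ≤ n`, the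
function `x ↦ 1.25506 * x - π(n) * log x` is increasing for `x ≥ n`. -/
lemma primeCounting_mul_log_lt_of_floor {n : ℕ} {x : ℝ} (hn : 1 ≤ n) (hx : n ≤ x)
    (h : (n.primeCounting : ℝ) * Real.log n < 1.25506 * n) :
    (n.primeCounting : ℝ) * Real.log x < 1.25506 * x := by
  have hn0 : (0 : ℝ) < n := by exact_mod_cast hn
  have hlog : Real.log x ≤ Real.log n + (x / n - 1) := by
    have := Real.log_le_sub_one_of_pos (div_pos (hn0.trans_le hx) hn0)
    rw [Real.log_div (by linarith) hn0.ne'] at this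
    linarith
  have hk : (n.primeCounting : ℝ) ≤ n := by exact_mod_cast primeCounting_le_self n
  have hd : 0 ≤ x / n - 1 := by rw [sub_nonneg, one_le_div hn0]; exact hx
  have h1 : (n.primeCounting : ℝ) * (x / n - 1) ≤ n * (x / n - 1) := by gcongr
  have h2 : (n : ℝ) * (x / n - 1) = x - n := by field_simp
  have h3 := mul_le_mul_of_nonneg_left hlog (Nat.cast_nonneg (α := ℝ) n.primeCounting)
  nlinarith

/-- The constant `6931471808 / 10 ^ 10` is an upper bound for `log 2`. The numerator `a` is kept
abstract, so that elaboration never meets the power in `logTest` with its exponent evaluated. -/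
lemma mul_log_lt_of_pow_le {n k q : ℕ} {a : ℕ} (hn : 1 ≤ n) (hk : 1 ≤ k) (hq : 1 ≤ q)
    (h : n ^ q ≤ 2 ^ (a / (k * 6931471808)))
    (ha : 50000 * a ≤ 62753 * n * q * 10000000000) :
    (k : ℝ) * Real.log n < 1.25506 * n := by
  set j := a / (k * 6931471808) with hj
  have hjk : j * (k * 6931471808) ≤ a := Nat.div_mul_le_self _ _
  have hn0 : (0 : ℝ) < n := by exact_mod_cast hn
  have hq0 : (0 : ℝ) < q := by exact_mod_cast hq
  have hk0 : (0 : ℝ) < k := by exact_mod_cast hk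
  have h1 : Real.log ((n : ℝ) ^ q) ≤ Real.log ((2 : ℝ) ^ j) :=
    Real.log_le_log (by positivity) (by exact_mod_cast h)
  rw [Real.log_pow, Real.log_pow] at h1
  have h2 : (j : ℝ) * (k * 6931471808) ≤ a := by exact_mod_cast hjk
  have h3 : (50000 : ℝ) * a ≤ 62753 * n * q * 10000000000 := by exact_mod_cast ha
  have h4 := mul_le_mul_of_nonneg_left h1 hk0.le
  -- for `j = 0` the strict bound on `log 2` gives nothing, but then `log n ≤ 0`
  rcases Nat.eq_zero_or_pos j with h0 | h0
  · rw [h0] at h1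
    have : Real.log n ≤ 0 := by
      by_contra hcon
      have := mul_pos hq0 (not_le.1 hcon)
      simp at h1
      linarith
    nlinarith
  · have hj0 : (0 : ℝ) < j := by exact_mod_cast h0
    have h5 := mul_lt_mul_of_pos_left Real.log_two_lt_d9 (mul_pos hk0 hj0)
    refine lt_of_mul_lt_mul_left ?_ hq0.le
    linarith

lemma mul_log_lt_of_logTest {n k : ℕ} (hn : 1 ≤ n) (hk : 1 ≤ k) (h : logTest n k = true) :
    (k : ℝ) * Real.log n < 1.25506 * n := by
  rw [logTest, Nat.ble_eq] at h
  exact mul_log_lt_of_pow_le hn hk (by norm_num) h (by omega)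

/-- Soundness of `scan`. The invariant carries `log m` for the running product `m`; it is only
traded for a multiple of `log 2` when the scan stops. -/
lemma ScanInv.of_scan_aux {s f n n' k k' m e : ℕ} {t : ℝ} (hm : 1 ≤ m)
    (hI : ScanInv n k (t + Real.log m)) (hs : 1 ≤ s) (hn : s ≤ n) (hn' : n + f = n')
    (hf : n' < (s + 1) ^ 2) (h : scan s.factorial k' e f n k m = true) :
    ScanInv n' k' (t + e * Real.log 2) := by
  subst hn'
  induction f generalizing n k m with
  | zero =>
    rw [scan, Bool.and_eq_true, Nat.beq_eq, Nat.ble_eq] at h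
    obtain ⟨rfl, h⟩ := h
    refine ⟨hI.count, le_trans ?_ hI.le_theta, hI.bound⟩
    have : Real.log ((2 : ℝ) ^ e) ≤ Real.log m :=
      Real.log_le_log (by positivity) (by exact_mod_cast h)
    rw [Real.log_pow] at this
    linarith
  | succ f ih =>
    have hpt : Nat.beq (Nat.gcd (n + 1) s.factorial) 1 = true ↔ (n + 1).Prime := by
      rw [Nat.beq_eq, prime_iff_coprime_factorial (s := s) (by omega) (by omega) (by omega)]
    rw [scan] at h
    simp only [force_eq] at h
    rw [show n + (f + 1) = (n + 1) + f by ring]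
    by_cases hp : (n + 1).Prime
    · rw [if_pos (hpt.2 hp), Bool.and_eq_true] at h
      have hlt' := mul_log_lt_of_logTest (by omega) (by omega) h.1
      refine ih (m := m * (n + 1)) (Nat.mul_pos hm n.succ_pos) ?_ (by omega) h.2 (by omega)
      refine ⟨by rw [primeCounting_succ_of_prime hp, hI.count], ?_, ?_⟩
      · rw [theta_succ_of_prime hp, Nat.cast_mul,
          Real.log_mul (by positivity) (by positivity)]
        have := hI.le_theta
        linarith
      · intro i hi1 hi2
        rcases Nat.lt_or_ge n i with hlt | hle
        · obtain rfl : i = n + 1 := by omega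
          rw [primeCounting_succ_of_prime hp, hI.count]
          exact hlt'
        · exact hI.bound i hi1 hle
    · rw [if_neg (fun hh => hp (hpt.1 hh))] at h
      refine ih hm ?_ (by omega) h (by omega)
      refine ⟨by rw [primeCounting_succ_of_not_prime hp, hI.count], ?_, ?_⟩
      · exact hI.le_theta.trans (theta_mono (by push_cast; linarith))
      · intro i hi1 hi2
        rcases Nat.lt_or_ge n i with hlt | hle
        · obtain rfl : i = n + 1 := by omega
          rw [primeCounting_succ_of_not_prime hp]
          exact primeCounting_mul_log_lt_of_floor (hs.trans hn) (by push_cast; linarith)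
            (hI.bound n (hs.trans hn) le_rfl)
        · exact hI.bound i hi1 hle

/-- One block of the computation: it extends the scan from `n` to `n'`, provided every composite
number in the block has a prime factor at most `s`. -/
lemma ScanInv.of_scan {s f n n' k k' E e E' : ℕ} (hI : ScanInv n k (E * Real.log 2))
    (hs : 1 ≤ s) (hn : s ≤ n) (hn' : n + f = n') (hE : E + e = E')
    (hf : n' < (s + 1) ^ 2)
    (h : (force s.factorial fun F => scan F k' e f n k 1) = true) :
    ScanInv n' k' (E' * Real.log 2) := by
  subst hE
  rw [force_eq] at h
  rw [Nat.cast_add, add_mul]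
  exact ScanInv.of_scan_aux (m := 1) le_rfl (by simpa using hI) hs hn hn' hf h

/-! ### The computation, in blocks

Each block restarts the running product at `1`, which keeps the recursion depth and the size of
that product moderate. The suffix of the name is the last integer of the block. The first blocks
are short because `s` has to satisfy `s ≤ n` and `n' < (s + 1) ^ 2`.
-/

lemma scan_3 :
    (force (Nat.factorial 1) fun F => scan F 2 2 2 1 0 1) = true := by decide +kernel

lemma scan_15 :
    (force (Nat.factorial 3) fun F => scan F 6 12 12 3 2 1) = true := by decide +kernel

lemma scan_255 :
    (force (Nat.factorial 15) fun F => scan F 54 320 240 15 6 1) = true := by decide +kernel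

lemma scan_1024 :
    (force (Nat.factorial 255) fun F => scan F 172 1084 769 255 54 1) = true := by decide +kernel

lemma scan_2048 :
    (force (Nat.factorial 255) fun F => scan F 309 1444 1024 1024 172 1) = true := by decide +kernel

lemma scan_3072 :
    (force (Nat.factorial 255) fun F => scan F 439 1470 1024 2048 309 1) = true := by decide +kernel

lemma scan_4096 :
    (force (Nat.factorial 255) fun F => scan F 564 1475 1024 3072 439 1) = true := by decide +kernel

lemma scan_5120 :
    (force (Nat.factorial 255) fun F => scan F 685 1472 1024 4096 564 1) = true := by decide +kernel

lemma scan_6144 :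
    (force (Nat.factorial 255) fun F => scan F 801 1445 1024 5120 685 1) = true := by decide +kernel

lemma scan_7168 :
    (force (Nat.factorial 255) fun F => scan F 916 1460 1024 6144 801 1) = true := by decide +kernel

lemma scan_8192 :
    (force (Nat.factorial 255) fun F => scan F 1028 1445 1024 7168 916 1) = true := by decide +kernel

lemma scan_9216 :
    (force (Nat.factorial 255) fun F => scan F 1142 1491 1024 8192 1028 1) = true := by decide +kernel

lemma scan_10240 :
    (force (Nat.factorial 255) fun F => scan F 1254 1483 1024 9216 1142 1) = true := by decide +kernel

lemma scan_11264 :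
    (force (Nat.factorial 255) fun F => scan F 1362 1446 1024 10240 1254 1) = true := by decide +kernel

lemma scan_12288 :
    (force (Nat.factorial 255) fun F => scan F 1469 1447 1024 11264 1362 1) = true := by decide +kernel

lemma scan_13312 :
    (force (Nat.factorial 255) fun F => scan F 1580 1514 1024 12288 1469 1) = true := by decide +kernel

lemma scan_14336 :
    (force (Nat.factorial 255) fun F => scan F 1681 1389 1024 13312 1580 1) = true := by decide +kernel

lemma scan_15360 :
    (force (Nat.factorial 255) fun F => scan F 1794 1565 1024 14336 1681 1) = true := by decide +kernel

lemma scan_16384 :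
    (force (Nat.factorial 255) fun F => scan F 1900 1478 1024 15360 1794 1) = true := by decide +kernel

/-- `π(16384) = 1900` and `θ(16384) ≥ 23442 log 2`, together with the inequality at all integers up
to `16384`. -/
lemma scanInv_16384 : ScanInv 16384 1900 (23442 * Real.log 2) := by
  have h : ScanInv 1 0 ((0 : ℕ) * Real.log 2) := by
    refine ⟨by simp, by simp, ?_⟩
    intro i h1 h2
    obtain rfl : i = 1 := by omega
    norm_num
  have h := h.of_scan (s := 1) (n' := 3) (E' := 2) (by norm_num) (by norm_num)
    (by norm_num) (by norm_num) (by norm_num) scan_3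
  have h := h.of_scan (s := 3) (n' := 15) (E' := 14) (by norm_num) (by norm_num)
    (by norm_num) (by norm_num) (by norm_num) scan_15
  have h := h.of_scan (s := 15) (n' := 255) (E' := 334) (by norm_num) (by norm_num)
    (by norm_num) (by norm_num) (by norm_num) scan_255
  have h := h.of_scan (s := 255) (n' := 1024) (E' := 1418) (by norm_num) (by norm_num)
    (by norm_num) (by norm_num) (by norm_num) scan_1024
  have h := h.of_scan (s := 255) (n' := 2048) (E' := 2862) (by norm_num) (by norm_num)
    (by norm_num) (by norm_num) (by norm_num) scan_2048
  have h := h.of_scan (s := 255) (n' := 3072) (E' := 4332) (by norm_num) (by norm_num)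
    (by norm_num) (by norm_num) (by norm_num) scan_3072
  have h := h.of_scan (s := 255) (n' := 4096) (E' := 5807) (by norm_num) (by norm_num)
    (by norm_num) (by norm_num) (by norm_num) scan_4096
  have h := h.of_scan (s := 255) (n' := 5120) (E' := 7279) (by norm_num) (by norm_num)
    (by norm_num) (by norm_num) (by norm_num) scan_5120
  have h := h.of_scan (s := 255) (n' := 6144) (E' := 8724) (by norm_num) (by norm_num)
    (by norm_num) (by norm_num) (by norm_num) scan_6144
  have h := h.of_scan (s := 255) (n' := 7168) (E' := 10184) (by norm_num) (by norm_num)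
    (by norm_num) (by norm_num) (by norm_num) scan_7168
  have h := h.of_scan (s := 255) (n' := 8192) (E' := 11629) (by norm_num) (by norm_num)
    (by norm_num) (by norm_num) (by norm_num) scan_8192
  have h := h.of_scan (s := 255) (n' := 9216) (E' := 13120) (by norm_num) (by norm_num)
    (by norm_num) (by norm_num) (by norm_num) scan_9216
  have h := h.of_scan (s := 255) (n' := 10240) (E' := 14603) (by norm_num) (by norm_num)
    (by norm_num) (by norm_num) (by norm_num) scan_10240
  have h := h.of_scan (s := 255) (n' := 11264) (E' := 16049) (by norm_num) (by norm_num)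
    (by norm_num) (by norm_num) (by norm_num) scan_11264
  have h := h.of_scan (s := 255) (n' := 12288) (E' := 17496) (by norm_num) (by norm_num)
    (by norm_num) (by norm_num) (by norm_num) scan_12288
  have h := h.of_scan (s := 255) (n' := 13312) (E' := 19010) (by norm_num) (by norm_num)
    (by norm_num) (by norm_num) (by norm_num) scan_13312
  have h := h.of_scan (s := 255) (n' := 14336) (E' := 20399) (by norm_num) (by norm_num)
    (by norm_num) (by norm_num) (by norm_num) scan_14336
  have h := h.of_scan (s := 255) (n' := 15360) (E' := 21964) (by norm_num) (by norm_num)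
    (by norm_num) (by norm_num) (by norm_num) scan_15360
  have h := h.of_scan (s := 255) (n' := 16384) (E' := 23442) (by norm_num) (by norm_num)
    (by norm_num) (by norm_num) (by norm_num) scan_16384
  exact_mod_cast h

/-! ### Logarithms of factorials -/

lemma log_factorial_le (n : ℕ) (hn : 1 ≤ n) :
    Real.log n.factorial ≤ n * Real.log n - n + 1 + Real.log n := by
  induction n, hn using Nat.le_induction with
  | base => simp
  | succ n hn ih =>
    have hn0 : (0 : ℝ) < n := by exact_mod_cast hn
    rw [Nat.factorial_succ, Nat.cast_mul, Real.log_mul (by positivity) (by positivity)]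
    push_cast
    -- `log (1 + 1/n) ≥ 1/(n + 1)`
    have h1 : 1 ≤ (n + 1) * (Real.log (n + 1) - Real.log n) := by
      have := Real.one_sub_inv_le_log_of_pos (show (0 : ℝ) < (n + 1) / n by positivity)
      rw [Real.log_div (by positivity) hn0.ne'] at this
      have h2 := mul_le_mul_of_nonneg_left this (show (0 : ℝ) ≤ n + 1 by positivity)
      refine le_trans (le_of_eq ?_) h2
      field_simp
      ring
    linarith

lemma le_log_factorial (n : ℕ) (hn : 1 ≤ n) :
    n * Real.log n - n + 1 ≤ Real.log n.factorial := by
  induction n, hn using Nat.le_induction with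
  | base => simp
  | succ n hn ih =>
    have hn0 : (0 : ℝ) < n := by exact_mod_cast hn
    rw [Nat.factorial_succ, Nat.cast_mul, Real.log_mul (by positivity) (by positivity)]
    push_cast
    -- `log (1 + 1/n) ≤ 1/n`
    have h1 : n * (Real.log (n + 1) - Real.log n) ≤ 1 := by
      have := Real.log_le_sub_one_of_pos (show (0 : ℝ) < (n + 1) / n by positivity)
      rw [Real.log_div (by positivity) hn0.ne'] at this
      have h2 := mul_le_mul_of_nonneg_left this hn0.le
      refine h2.trans (le_of_eq ?_)
      field_simp
      ring
    linarith

lemma mul_log_sub_mono {a b : ℝ} (ha : 1 ≤ a) (hab : a ≤ b) :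
    a * Real.log a - a ≤ b * Real.log b - b := by
  have ha0 : 0 < a := by linarith
  have hb0 : 0 < b := by linarith
  have h := Real.one_sub_inv_le_log_of_pos (div_pos hb0 ha0)
  rw [Real.log_div (by linarith) (by linarith)] at h
  have h2 := mul_le_mul_of_nonneg_left h (show 0 ≤ b by linarith)
  have h3 : b * (1 - (b / a)⁻¹) = b - a := by rw [inv_div]; field_simp
  have h4 : 0 ≤ (b - a) * Real.log a := mul_nonneg (by linarith) (Real.log_nonneg ha)
  nlinarith

lemma log_factorial_floor_le {y : ℝ} (hy : 1 ≤ y) :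
    Real.log (⌊y⌋₊).factorial ≤ y * Real.log y - y + 1 + Real.log y := by
  have h1 : 1 ≤ ⌊y⌋₊ := (Nat.one_le_floor_iff y).2 hy
  have h1' : (1 : ℝ) ≤ (⌊y⌋₊ : ℝ) := by exact_mod_cast h1
  have hle : (⌊y⌋₊ : ℝ) ≤ y := Nat.floor_le (by linarith)
  have := log_factorial_le _ h1
  have := mul_log_sub_mono h1' hle
  have := Real.log_le_log (by linarith) hle
  linarith

lemma le_log_factorial_floor {y : ℝ} (hy : 1 ≤ y) :
    y * Real.log y - y + 1 - Real.log y ≤ Real.log (⌊y⌋₊).factorial := by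
  have h1 : 1 ≤ ⌊y⌋₊ := (Nat.one_le_floor_iff y).2 hy
  have h1' : (1 : ℝ) ≤ (⌊y⌋₊ : ℝ) := by exact_mod_cast h1
  have hle : (⌊y⌋₊ : ℝ) ≤ y := Nat.floor_le (by linarith)
  have hlt : y < ⌊y⌋₊ + 1 := Nat.lt_floor_add_one y
  have h2 := le_log_factorial _ h1
  set m : ℝ := (⌊y⌋₊ : ℝ)
  -- the function `t log t - t` has slope at most `log y` on `[m, y]`
  have h := Real.log_le_sub_one_of_pos (show (0 : ℝ) < y / m by positivity)
  rw [Real.log_div (by linarith) (by linarith)] at h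
  have h3 := mul_le_mul_of_nonneg_left h (show 0 ≤ m by linarith)
  have h4 : m * (y / m - 1) = y - m := by field_simp
  have h5 : 0 ≤ (m + 1 - y) * Real.log y := mul_nonneg (by linarith) (Real.log_nonneg hy)
  nlinarith

/-! ### Chebyshev's upper bound for `ψ` -/

/-- Legendre's formula in additive form, a consequence of `Λ * ζ = log`. -/
lemma log_factorial_eq_sum (N : ℕ) :
    Real.log N.factorial = ∑ m ∈ Finset.Ioc 0 N, Λ m * ((N / m : ℕ) : ℝ) := by
  rw [← sum_Ioc_mul_zeta_eq_sum, vonMangoldt_mul_zeta]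
  induction N with
  | zero => simp
  | succ n ih =>
    rw [Nat.factorial_succ, Nat.cast_mul, Real.log_mul (by positivity) (by positivity), ih,
      Finset.sum_Ioc_succ_top (by omega), add_comm]
    simp [ArithmeticFunction.log_apply]

/-- The sum is extended from `m ≤ N / d` to `m ≤ N` (the extra terms vanish), so that the formulas
for different `d` can be combined term by term. -/
lemma log_factorial_div_eq_sum (N d : ℕ) :
    Real.log (N / d).factorial = ∑ m ∈ Finset.Ioc 0 N, Λ m * ((N / m / d : ℕ) : ℝ) := by
  rw [log_factorial_eq_sum]
  simp_rw [Nat.div_div_eq_div_mul, mul_comm d]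
  apply Finset.sum_subset
  · exact Finset.Ioc_subset_Ioc_right (Nat.div_le_self N d)
  · intro m _ hm
    rcases Nat.eq_zero_or_pos m with rfl | hm0
    · simp
    have hlt : N / d < m := by
      by_contra hcon
      exact hm (Finset.mem_Ioc.2 ⟨hm0, by omega⟩)
    have : N / (m * d) = 0 := by
      rw [mul_comm, ← Nat.div_div_eq_div_mul, Nat.div_eq_of_lt hlt]
    simp [this]

/-- With `q = ⌊N / m⌋`, the coefficient of `Λ m` on the right is
`q - ⌊q/2⌋ - ⌊q/3⌋ - ⌊q/5⌋ + ⌊q/30⌋`. As `1 - 1/2 - 1/3 - 1/5 + 1/30 = 0`, it is periodic modulo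
`30`; it only takes the values `0` and `1`, and it is `1` for `1 ≤ q < 6`, that is for
`N / 6 < m ≤ N`. -/
lemma psi_sub_psi_le (N : ℕ) :
    ψ (N : ℝ) - ψ ((N / 6 : ℕ) : ℝ) ≤ Real.log N.factorial - Real.log (N / 2).factorial
      - Real.log (N / 3).factorial - Real.log (N / 5).factorial
      + Real.log (N / 30).factorial := by
  rw [log_factorial_eq_sum N, log_factorial_div_eq_sum N 2, log_factorial_div_eq_sum N 3,
    log_factorial_div_eq_sum N 5, log_factorial_div_eq_sum N 30, ← Finset.sum_sub_distrib,
    ← Finset.sum_sub_distrib, ← Finset.sum_sub_distrib, ← Finset.sum_add_distrib, psi, psi,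
    Nat.floor_natCast, Nat.floor_natCast, sub_le_iff_le_add,
    ← Finset.sum_filter_add_sum_filter_not (Finset.Ioc 0 N) (fun m => m ≤ N / 6)]
  have hfil : (Finset.Ioc 0 N).filter (fun m => m ≤ N / 6) = Finset.Ioc 0 (N / 6) := by
    ext m
    simp only [Finset.mem_filter, Finset.mem_Ioc]
    omega
  rw [hfil, add_comm]
  gcongr
  rw [Finset.sum_filter]
  refine Finset.sum_le_sum fun m hm => ?_
  rw [Finset.mem_Ioc] at hm
  have hΛ : 0 ≤ Λ m := vonMangoldt_nonneg
  set q := N / m with hq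
  rw [← mul_sub, ← mul_sub, ← mul_sub, ← mul_add]
  split_ifs with h
  · have hnat : q / 2 + q / 3 + q / 5 ≤ q + q / 30 := by omega
    have : ((q / 2 : ℕ) : ℝ) + (q / 3 : ℕ) + (q / 5 : ℕ) ≤ q + (q / 30 : ℕ) := by
      exact_mod_cast hnat
    exact mul_nonneg hΛ (by linarith)
  · have hq1 : 1 ≤ q := (Nat.one_le_div_iff hm.1).2 hm.2
    have hq6 : q < 6 := (Nat.div_lt_iff_lt_mul hm.1).2 (by omega)
    have hnat : 1 + q / 2 + q / 3 + q / 5 ≤ q + q / 30 := by omega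
    have : (1 : ℝ) + (q / 2 : ℕ) + (q / 3 : ℕ) + (q / 5 : ℕ) ≤ q + (q / 30 : ℕ) := by
      exact_mod_cast hnat
    nlinarith

set_option exponentiation.threshold 400 in
/-- Chebyshev's constant `(log 2)/2 + (log 3)/3 + (log 5)/5 - (log 30)/30 = 0.92129…`. Summing
`1 + 1/6 + 1/36 + …` multiplies it by `6/5`, which yields `1.1056`. The proof rests on
`(2 ^ 14 * 3 ^ 9 * 5 ^ 5) ^ 8 ≤ 2 ^ 319`. -/
lemma chebyshev_constant_le :
    (14 * Real.log 2 + 9 * Real.log 3 + 5 * Real.log 5) / 30 ≤ 1.1056 * (5 / 6) := by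
  have h : Real.log ((2 ^ 14 * 3 ^ 9 * 5 ^ 5) ^ 8) ≤ Real.log (2 ^ 319) :=
    Real.log_le_log (by positivity) (by norm_num)
  rw [Real.log_pow, Real.log_pow, Real.log_mul (by positivity) (by positivity),
    Real.log_mul (by positivity) (by positivity), Real.log_pow, Real.log_pow,
    Real.log_pow] at h
  have := Real.log_two_lt_d9
  push_cast at h
  linarith

lemma psi_sub_psi_le_explicit {N : ℕ} (hN : 30 ≤ N) :
    ψ (N : ℝ) - ψ ((N / 6 : ℕ) : ℝ) ≤
      1.1056 * (5 / 6) * N + 5 * Real.log N - 1 - 2 * (Real.log 2 + Real.log 3 + Real.log 5) := by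
  have hx : (30 : ℝ) ≤ N := by exact_mod_cast hN
  refine (psi_sub_psi_le N).trans ?_
  have key (d : ℕ) : N / d = ⌊(N : ℝ) / d⌋₊ := by rw [Nat.floor_div_natCast, Nat.floor_natCast]
  have h1 := log_factorial_floor_le (y := N) (by linarith)
  have h2 := le_log_factorial_floor (y := N / (2 : ℕ)) (by push_cast; linarith)
  have h3 := le_log_factorial_floor (y := N / (3 : ℕ)) (by push_cast; linarith)
  have h5 := le_log_factorial_floor (y := N / (5 : ℕ)) (by push_cast; linarith)
  have h30 := log_factorial_floor_le (y := N / (30 : ℕ)) (by push_cast; linarith)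
  rw [Nat.floor_natCast] at h1
  rw [← key] at h2 h3 h5 h30
  have hN0 : (N : ℝ) ≠ 0 := by linarith
  have l30 : Real.log 30 = Real.log 2 + Real.log 3 + Real.log 5 := by
    rw [← Real.log_mul (by norm_num) (by norm_num), ← Real.log_mul (by norm_num) (by norm_num)]
    norm_num
  push_cast at h2 h3 h5 h30
  rw [Real.log_div hN0 (by norm_num)] at h2 h3 h5 h30
  rw [l30] at h30
  have := mul_le_mul_of_nonneg_right chebyshev_constant_le (show (0 : ℝ) ≤ N by linarith)
  linarith

/-- Strong induction through `N / 6`. The main terms match because `5/6 + 1/6 = 1`; the error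
`5 log N` of one step is absorbed by `1.4 (log² N - (log N - log 6)²)`, as `2.8 log 6 ≥ 5`. -/
lemma psi_nat_le (N : ℕ) : ψ (N : ℝ) ≤ 1.1056 * N + 1.4 * Real.log N ^ 2 + 12 := by
  induction N using Nat.strong_induction_on with
  | _ N ih =>
  have hlog2 := Real.log_two_lt_d9
  -- small `N` are handled through `ψ(M) = log lcm(1, …, M)`
  have base (M c : ℕ) (hc : Nat.lcmUpto M ≤ 2 ^ c) (hNM : N ≤ M) : ψ (N : ℝ) ≤ c * 0.6931471808 := by
    have h1 : ψ (N : ℝ) ≤ ψ (M : ℝ) := psi_mono (by exact_mod_cast hNM)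
    rw [psi_eq_log_lcmUpto M] at h1
    have h2 : Real.log (Nat.lcmUpto M) ≤ Real.log ((2 : ℝ) ^ c) :=
      Real.log_le_log (by exact_mod_cast Nat.lcmUpto_pos M) (by exact_mod_cast hc)
    rw [Real.log_pow] at h2
    have h3 : (c : ℝ) * Real.log 2 ≤ c * 0.6931471808 := by gcongr
    linarith
  have hsq := sq_nonneg (Real.log N)
  rcases Nat.lt_or_ge N 2 with h | h
  · rw [psi_eq_zero_of_lt_two (by exact_mod_cast h)]
    positivity
  have h' : (2 : ℝ) ≤ N := by exact_mod_cast h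
  rcases Nat.lt_or_ge N 16 with h16 | h16
  · have := base 15 19 (by decide +kernel) (by omega)
    push_cast at this
    linarith
  have h16' : (16 : ℝ) ≤ N := by exact_mod_cast h16
  rcases Nat.lt_or_ge N 30 with h30 | h30
  · have := base 29 42 (by decide +kernel) (by omega)
    push_cast at this
    linarith
  have hrec := psi_sub_psi_le_explicit h30
  have ih6 := ih (N / 6) (by omega)
  have h30' : (30 : ℝ) ≤ N := by exact_mod_cast h30
  have hdiv : ((N / 6 : ℕ) : ℝ) ≤ N / 6 := Nat.cast_div_le
  have hdiv1 : (1 : ℝ) ≤ ((N / 6 : ℕ) : ℝ) := by exact_mod_cast (by omega : 1 ≤ N / 6)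
  have hlogdiv : Real.log ((N / 6 : ℕ) : ℝ) ≤ Real.log N - Real.log 6 := by
    rw [← Real.log_div (by linarith) (by norm_num)]
    exact Real.log_le_log (by linarith) hdiv
  have hsq6 : Real.log ((N / 6 : ℕ) : ℝ) ^ 2 ≤ (Real.log N - Real.log 6) ^ 2 :=
    pow_le_pow_left₀ (Real.log_nonneg hdiv1) hlogdiv 2
  have hlog2' := Real.log_two_gt_d9
  have l6 : Real.log 6 = Real.log 2 + Real.log 3 := by
    rw [← Real.log_mul (by norm_num) (by norm_num)]; norm_num
  -- `31/12 ≤ log₂ 6 ≤ 32/12`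
  have l6lo : 31 * Real.log 2 ≤ 12 * Real.log 6 := by
    have : Real.log (2 ^ 31) ≤ Real.log (6 ^ 12) := Real.log_le_log (by positivity) (by norm_num)
    rw [Real.log_pow, Real.log_pow] at this
    exact_mod_cast this
  have l6hi : 12 * Real.log 6 ≤ 32 * Real.log 2 := by
    have : Real.log (6 ^ 12) ≤ Real.log (2 ^ 32) := Real.log_le_log (by positivity) (by norm_num)
    rw [Real.log_pow, Real.log_pow] at this
    exact_mod_cast this
  have l5 : 2 * Real.log 2 ≤ Real.log 5 := by
    have : Real.log (2 ^ 2) ≤ Real.log 5 := Real.log_le_log (by positivity) (by norm_num)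
    rw [Real.log_pow] at this
    exact_mod_cast this
  have hLN : 0 ≤ Real.log N := Real.log_nonneg (by linarith)
  have hprod : 5 * Real.log N ≤ 2.8 * Real.log 6 * Real.log N := by
    apply mul_le_mul_of_nonneg_right _ hLN
    linarith
  have hb : Real.log 6 ≤ 1.85 := by linarith
  have hb0 : 0 ≤ Real.log 6 := by linarith
  have hsq' : Real.log 6 ^ 2 ≤ 1.85 ^ 2 := pow_le_pow_left₀ hb0 hb 2
  nlinarith

/-! ### Partial summation for `x ≥ 16384` -/

lemma theta_le_of_ge {t : ℝ} (ht : 16384 ≤ t) : θ t ≤ 1.115 * t := by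
  have hn : 16384 ≤ ⌊t⌋₊ := Nat.le_floor (by exact_mod_cast ht)
  have hn' : (16384 : ℝ) ≤ (⌊t⌋₊ : ℝ) := by exact_mod_cast hn
  have hle : (⌊t⌋₊ : ℝ) ≤ t := Nat.floor_le (by linarith)
  have hψ := psi_nat_le ⌊t⌋₊
  rw [theta_eq_theta_coe_floor]
  have hθ := theta_le_psi (⌊t⌋₊ : ℝ)
  set n : ℝ := (⌊t⌋₊ : ℝ)
  -- `log t / √t` decreases for `t ≥ e²`, so its value at `16384`, which is `14 log 2 / 128`,
  -- turns `log² n` into a small multiple of `n`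
  have he : Real.exp 2 ≤ 16384 := by
    have := Real.exp_one_lt_d9
    rw [show (2 : ℝ) = 1 + 1 by norm_num, Real.exp_add]
    nlinarith [Real.exp_pos 1]
  have hanti := Real.log_div_sqrt_antitoneOn (Set.mem_Ici.2 he) (Set.mem_Ici.2 (he.trans hn')) hn'
  have hs : √(16384 : ℝ) = 128 := by
    rw [show (16384 : ℝ) = 128 ^ 2 by norm_num]
    exact Real.sqrt_sq (by norm_num)
  have hl : Real.log 16384 = 14 * Real.log 2 := by
    rw [show (16384 : ℝ) = 2 ^ 14 by norm_num, Real.log_pow]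
    norm_num
  have hlog2 := Real.log_two_lt_d9
  simp only [hs, hl] at hanti
  have hspos : 0 < √n := Real.sqrt_pos.2 (by linarith)
  rw [div_le_iff₀ hspos] at hanti
  have h1 : Real.log n ≤ 0.0759 * √n := by
    refine hanti.trans ?_
    gcongr
    linarith
  have h2 : Real.log n ^ 2 ≤ (0.0759 * √n) ^ 2 :=
    pow_le_pow_left₀ (Real.log_nonneg (by linarith)) h1 2
  rw [mul_pow, Real.sq_sqrt (by linarith)] at h2
  linarith

/-- The derivative of `t / log t` is `(log t - 1) / log² t`, and
`0.14006 * (log t - 1) ≥ 0.14006 * 8.7 ≥ 1.115`, so the integrand is at most `0.14006` times that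
derivative. -/
lemma integral_theta_le {x : ℝ} (hx : 16384 ≤ x) :
    ∫ t in (16384 : ℝ)..x, θ t / (t * Real.log t ^ 2) ≤
      0.14006 * (x / Real.log x) - 0.14006 * (16384 / Real.log 16384) := by
  have hl : Real.log 16384 = 14 * Real.log 2 := by
    rw [show (16384 : ℝ) = 2 ^ 14 by norm_num, Real.log_pow]
    norm_num
  have hlog2 := Real.log_two_gt_d9
  have hlog {t : ℝ} (ht : 16384 ≤ t) : 9.7 ≤ Real.log t := by
    have := Real.log_le_log (by norm_num) ht
    linarith
  have hderiv : ∀ t ∈ Set.uIcc (16384 : ℝ) x, HasDerivAt (fun t => 0.14006 * (t / Real.log t))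
      (0.14006 * ((Real.log t - 1) / Real.log t ^ 2)) t := by
    intro t ht
    rw [Set.uIcc_of_le hx] at ht
    have h1 := hlog ht.1
    have ht0 : t ≠ 0 := by linarith [ht.1]
    have h := ((hasDerivAt_id t).div (Real.hasDerivAt_log ht0) (by linarith)).const_mul 0.14006
    exact h.congr_deriv (by simp [ht0])
  have hint : IntervalIntegrable (fun t => 0.14006 * ((Real.log t - 1) / Real.log t ^ 2))
      MeasureTheory.volume 16384 x := by
    apply ContinuousOn.intervalIntegrable
    intro t ht
    rw [Set.uIcc_of_le hx] at ht
    have h1 := hlog ht.1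
    have ht0 : t ≠ 0 := by linarith [ht.1]
    have : Real.log t ^ 2 ≠ 0 := by positivity
    exact ContinuousAt.continuousWithinAt (by fun_prop (disch := assumption))
  rw [← intervalIntegral.integral_eq_sub_of_hasDerivAt hderiv hint]
  refine intervalIntegral.integral_mono_on hx ?_ hint ?_
  · rw [intervalIntegrable_iff_integrableOn_Icc_of_le hx]
    exact (integrableOn_theta_div_id_mul_log_sq x).mono_set
      (Set.Icc_subset_Icc_left (by norm_num))
  · intro t ht
    have h1 := hlog ht.1
    have ht0 : 0 < t := by linarith [ht.1]
    have hθ := theta_le_of_ge ht.1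
    have hL : 0 < Real.log t := by linarith
    rw [← mul_div_assoc, div_le_div_iff₀ (by positivity) (by positivity)]
    have : θ t ≤ 0.14006 * (Real.log t - 1) * t := by nlinarith
    calc θ t * Real.log t ^ 2 ≤ (0.14006 * (Real.log t - 1) * t) * Real.log t ^ 2 := by gcongr
      _ = _ := by ring

/-- Difference of the partial summation formulas at `x` and at `16384`; note
`1.115 + 0.14006 = 1.25506`. -/
lemma primeCounting_lt_of_ge {x : ℝ} (hx : 16384 ≤ x)
    (hinv : (Nat.primeCounting 16384 : ℝ) * Real.log 16384 < θ 16384 + 0.14006 * 16384) :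
    (Nat.primeCounting ⌊x⌋₊ : ℝ) < 1.25506 * x / Real.log x := by
  have hL0 : 0 < Real.log 16384 := Real.log_pos (by norm_num)
  have hL : 0 < Real.log x := Real.log_pos (by linarith)
  have h0 := primeCounting_eq_theta_div_log_add_integral (x := 16384) (by norm_num)
  have h1 := primeCounting_eq_theta_div_log_add_integral (x := x) (by linarith)
  rw [Nat.floor_ofNat] at h0
  have hii (b : ℝ) (hb : 2 ≤ b) : IntervalIntegrable (fun t ↦ θ t / (t * Real.log t ^ 2))
      MeasureTheory.volume 2 b :=
    (intervalIntegrable_iff_integrableOn_Icc_of_le hb).2 (integrableOn_theta_div_id_mul_log_sq b)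
  have hsub := intervalIntegral.integral_interval_sub_left (hii x (by linarith))
    (hii 16384 (by norm_num))
  have hI := integral_theta_le hx
  have hθ : θ x / Real.log x ≤ 1.115 * (x / Real.log x) := by
    rw [← mul_div_assoc]
    exact div_le_div_of_nonneg_right (theta_le_of_ge hx) hL.le
  have hfin : (Nat.primeCounting 16384 : ℝ) <
      θ 16384 / Real.log 16384 + 0.14006 * (16384 / Real.log 16384) := by
    rw [← mul_div_assoc, ← add_div, lt_div_iff₀ hL0]
    exact hinv
  rw [mul_div_assoc]
  linarith

theorem primeCounting_lt (x : ℝ) (hx : 1 < x) :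
    (Nat.primeCounting ⌊x⌋₊ : ℝ) < 1.25506 * x / Real.log x := by
  rcases lt_or_ge x 16384 with h | h
  · have hn : 1 ≤ ⌊x⌋₊ := (Nat.one_le_floor_iff x).2 hx.le
    have hlt : ⌊x⌋₊ ≤ 16384 := by
      have := (Nat.floor_lt (by linarith : 0 ≤ x)).2 (by exact_mod_cast h : x < (16384 : ℕ))
      exact this.le
    rw [lt_div_iff₀ (Real.log_pos hx)]
    exact primeCounting_mul_log_lt_of_floor hn (Nat.floor_le (by linarith))
      (scanInv_16384.bound _ hn hlt)
  · refine primeCounting_lt_of_ge h ?_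
    have h1 := scanInv_16384.le_theta
    have hl : Real.log 16384 = 14 * Real.log 2 := by
      rw [show (16384 : ℝ) = 2 ^ 14 by norm_num, Real.log_pow]
      norm_num
    rw [scanInv_16384.count, hl]
    have := Real.log_two_lt_d9
    have := Real.log_two_gt_d9
    push_cast at h1 ⊢
    linarith
end
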